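/- Let f : [0,∞) → ℝ be càdlàg with Δf(t) ≥ 0 for every t > 0 and f(0) ≥ 0, let γ > 0, and set f^γ(u) = f(u) − γu. Let h be a solution of the sticky equation Sγ(f) with c(t) = Leb({s ∈ [0,t] : h(s) > 0}). Let c* : [0,∞) → [0,∞) be non-decreasing with c*(0) = 0 and 1-Lipschitz (c*(t) − c*(s) ≤ t − s for s ≤ t), and suppose that the function h*(t) = f^γ(c*(t)) + γt is non-negative for all t ≥ 0. Then c*(t) ≤ c(t) for all t ≥ 0. -/

import Mathlib

/-!
The proof rests on three facts about a solution `h` with `c = posTime h` and `z = zeroTime h`.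

* `h` is non-negative (`StickySol.nonneg`). While `h < 0` neither clock runs, so `h` is frozen; it
  could become negative only through a jump, and `h`, being `f ∘ c` plus a continuous function,
  has no negative jumps.
* Consequently `c t + z t = t` (`StickySol.posTime_add_zeroTime`), and
  `h t = (f (c t) - γ c t) + γ t`.
* If `cs t > c t`, let `s` be the last time before `t` with `cs s ≤ c s`. For `r ∈ (s, t]` the
  intermediate value theorem provides `r' < r` with `cs r' = c r`, and `h* r' ≥ 0` then yields
  `h r ≥ γ (r - r') > 0`. Thus `c` runs at full speed on `(s, t]`, so that
  `c t - c s = t - s ≥ cs t - cs s`, a contradiction.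
-/

open MeasureTheory Set Function Filter Topology

/-- `f : ℝ → ℝ` is càdlàg on `[0,∞)`: right-continuous at every `t ≥ 0`
and with left limits at every `t > 0`. -/
def CadlagOn (f : ℝ → ℝ) : Prop :=
  (∀ t : ℝ, 0 ≤ t → ContinuousWithinAt f (Ici t) t) ∧
  (∀ t : ℝ, 0 < t → ∃ L : ℝ, Filter.Tendsto f (nhdsWithin t (Iio t)) (nhds L))

/-- `f` has non-negative jumps on `(0,∞)`: `Δf(t) = f t − f(t−) ≥ 0`. -/
def NonnegJumps (f : ℝ → ℝ) : Prop :=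
  ∀ t : ℝ, 0 < t → Function.leftLim f t ≤ f t

/-- `Leb({s ∈ [0,t] : h(s) > 0})`. -/
noncomputable def posTime (h : ℝ → ℝ) (t : ℝ) : ℝ :=
  (volume {s ∈ Icc (0:ℝ) t | 0 < h s}).toReal

/-- `Leb({s ∈ [0,t] : h(s) = 0})`. -/
noncomputable def zeroTime (h : ℝ → ℝ) (t : ℝ) : ℝ :=
  (volume {s ∈ Icc (0:ℝ) t | h s = 0}).toReal

/-- `h` is a solution of the sticky equation `Sγ(f)`:
`h` is measurable on `[0,∞)` and, for all `t ≥ 0`,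
`h(t) = f(Leb({s ∈ [0,t] : h(s) > 0})) + γ·Leb({s ∈ [0,t] : h(s) = 0})`. -/
def StickySol (f : ℝ → ℝ) (γ : ℝ) (h : ℝ → ℝ) : Prop :=
  Measurable ((Ici (0:ℝ)).restrict h) ∧
  ∀ t : ℝ, 0 ≤ t → h t = f (posTime h t) + γ * zeroTime h t

/-- The time spent up to `t` in an arbitrary set is `1`-Lipschitz in `t`. -/
theorem sojourn_sub_le (p : ℝ → Prop) {s t : ℝ} (hst : s ≤ t) :
    (volume {x ∈ Icc (0:ℝ) t | p x}).toReal - (volume {x ∈ Icc (0:ℝ) s | p x}).toReal ≤ t - s := by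
  have hsub : {x ∈ Icc (0:ℝ) t | p x} ⊆ {x ∈ Icc (0:ℝ) s | p x} ∪ Ioc s t := by
    rintro x ⟨hx, hp⟩
    rcases le_or_gt x s with h | h
    · exact Or.inl ⟨⟨hx.1, h⟩, hp⟩
    · exact Or.inr ⟨h, hx.2⟩
  have hfin : volume {x ∈ Icc (0:ℝ) s | p x} ≠ ⊤ :=
    measure_ne_top_of_subset (fun x hx => hx.1) (by simp)
  have h1 := (measure_mono hsub).trans (measure_union_le (μ := volume) _ _)
  have h2 := ENNReal.toReal_mono (ENNReal.add_ne_top.2 ⟨hfin, by simp⟩) h1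
  rw [ENNReal.toReal_add hfin (by simp), Real.volume_Ioc,
    ENNReal.toReal_ofReal (by linarith)] at h2
  linarith

theorem sojourn_mono (p : ℝ → Prop) {s t : ℝ} (hst : s ≤ t) :
    (volume {x ∈ Icc (0:ℝ) s | p x}).toReal ≤ (volume {x ∈ Icc (0:ℝ) t | p x}).toReal :=
  ENNReal.toReal_mono (measure_ne_top_of_subset (fun x hx => hx.1)
      (by simp : volume (Icc (0:ℝ) t) ≠ ⊤))
    (measure_mono fun _ hx => ⟨⟨hx.1.1, hx.1.2.trans hst⟩, hx.2⟩)

theorem sojourn_zero (p : ℝ → Prop) : (volume {x ∈ Icc (0:ℝ) 0 | p x}).toReal = 0 := by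
  have h : volume {x ∈ Icc (0:ℝ) 0 | p x} = 0 :=
    measure_mono_null (t := Icc (0:ℝ) 0) (fun x hx => hx.1) (by simp)
  rw [h, ENNReal.toReal_zero]

theorem sojourn_eq_of_forall_not (p : ℝ → Prop) {s t : ℝ} (hst : s ≤ t)
    (hp : ∀ r ∈ Ioc s t, ¬ p r) :
    (volume {x ∈ Icc (0:ℝ) t | p x}).toReal = (volume {x ∈ Icc (0:ℝ) s | p x}).toReal := by
  congr 2
  ext x
  constructor
  · rintro ⟨hx, hpx⟩
    refine ⟨⟨hx.1, ?_⟩, hpx⟩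
    by_contra! hlt
    exact hp x ⟨hlt, hx.2⟩ hpx
  · rintro ⟨hx, hpx⟩
    exact ⟨⟨hx.1, hx.2.trans hst⟩, hpx⟩

theorem continuous_of_mono_of_sub_le {c : ℝ → ℝ} (hmono : ∀ s t, s ≤ t → c s ≤ c t)
    (hlip : ∀ s t, s ≤ t → c t - c s ≤ t - s) : Continuous c := by
  refine (LipschitzWith.of_dist_le_mul (K := 1) fun x y => ?_).continuous
  rw [Real.dist_eq, Real.dist_eq, NNReal.coe_one, one_mul]
  rcases le_total x y with h | h
  · rw [abs_sub_comm, abs_sub_comm x, abs_of_nonneg (sub_nonneg.2 h),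
      abs_of_nonneg (sub_nonneg.2 (hmono _ _ h))]
    exact hlip _ _ h
  · rw [abs_of_nonneg (sub_nonneg.2 h), abs_of_nonneg (sub_nonneg.2 (hmono _ _ h))]
    exact hlip _ _ h

theorem continuous_posTime (h : ℝ → ℝ) : Continuous (posTime h) :=
  continuous_of_mono_of_sub_le (fun _ _ => sojourn_mono _) (fun _ _ => sojourn_sub_le _)

theorem continuous_zeroTime (h : ℝ → ℝ) : Continuous (zeroTime h) :=
  continuous_of_mono_of_sub_le (fun _ _ => sojourn_mono _) (fun _ _ => sojourn_sub_le _)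

/-- If `h s < 0`, then `h < 0` on a left neighbourhood of `s`, since `h` has no negative jump
at `s`. -/
theorem StickySol.eventually_neg_left {f h : ℝ → ℝ} {γ s : ℝ} (hγ : 0 < γ) (hf : CadlagOn f)
    (hjump : NonnegJumps f) (hsol : StickySol f γ h) (hs : 0 < s) (hneg : h s < 0) :
    ∀ᶠ r in 𝓝[<] s, h r < 0 := by
  have hpos : ∀ᶠ r in 𝓝[<] s, 0 ≤ r := by
    filter_upwards [Ioo_mem_nhdsLT hs] with r hr using hr.1.le
  have hs_eq := hsol.2 s hs.le
  by_cases hc : ∃ r, 0 ≤ r ∧ r < s ∧ posTime h r = posTime h s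
  · -- `posTime h` is constant just before `s`, so `f ∘ posTime h` does not jump at `s`.
    obtain ⟨r, hr0, hrs, hr⟩ := hc
    filter_upwards [Ioo_mem_nhdsLT hrs] with q hq
    have h1 : posTime h q = posTime h s :=
      le_antisymm (sojourn_mono _ hq.2.le) (hr ▸ sojourn_mono _ hq.1.le)
    have h2 : zeroTime h q ≤ zeroTime h s := sojourn_mono _ hq.2.le
    rw [hsol.2 q (hr0.trans hq.1.le), h1]
    nlinarith [mul_le_mul_of_nonneg_left h2 hγ.le]
  · -- Otherwise `posTime h` approaches `posTime h s` strictly from below.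
    push Not at hc
    have hlt : ∀ r, 0 ≤ r → r < s → posTime h r < posTime h s := fun r h0 h1 =>
      lt_of_le_of_ne (sojourn_mono _ h1.le) (hc r h0 h1)
    have hcs : 0 < posTime h s := lt_of_le_of_lt ENNReal.toReal_nonneg (hlt 0 le_rfl hs)
    have hT : Tendsto (posTime h) (𝓝[<] s) (𝓝[<] (posTime h s)) := by
      refine tendsto_nhdsWithin_iff.2
        ⟨(continuous_posTime h).continuousAt.tendsto.mono_left nhdsWithin_le_nhds, ?_⟩
      filter_upwards [hpos, self_mem_nhdsWithin] with r h0 h1 using hlt r h0 h1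
    have hL : Tendsto f (𝓝[<] (posTime h s)) (𝓝 (leftLim f (posTime h s))) :=
      tendsto_leftLim_of_tendsto (hf.2 _ hcs)
    have hlim := (hL.comp hT).add
      (((continuous_zeroTime h).continuousAt.tendsto.mono_left
        (nhdsWithin_le_nhds (s := Iio s) (a := s))).const_mul γ)
    have hj := hjump _ hcs
    filter_upwards [hlim.eventually_lt_const (by linarith : _ < (0:ℝ)), hpos] with r hr h0
    rw [hsol.2 r h0]
    exact hr

theorem StickySol.nonneg {f h : ℝ → ℝ} {γ : ℝ} (hγ : 0 < γ) (hf : CadlagOn f)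
    (hjump : NonnegJumps f) (hf0 : 0 ≤ f 0) (hsol : StickySol f γ h) {t : ℝ} (ht : 0 ≤ t) :
    0 ≤ h t := by
  by_contra! hneg
  have h0 : 0 ≤ h 0 := by
    rw [hsol.2 0 le_rfl, posTime, zeroTime, sojourn_zero, sojourn_zero]
    simpa using hf0
  set S : Set ℝ := {r ∈ Icc (0:ℝ) t | 0 ≤ h r}
  have hS0 : (0:ℝ) ∈ S := ⟨⟨le_rfl, ht⟩, h0⟩
  have hbdd : BddAbove S := ⟨t, fun r hr => hr.1.2⟩
  obtain ⟨s, hs⟩ : ∃ s, IsLUB S s := ⟨_, isLUB_csSup ⟨0, hS0⟩ hbdd⟩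
  have hs0 : 0 ≤ s := hs.1 hS0
  have hst : s ≤ t := hs.2 fun r hr => hr.1.2
  have hafter : ∀ r ∈ Ioc s t, h r < 0 := by
    intro r hr
    by_contra! hge
    exact absurd (hs.1 (show r ∈ S from ⟨⟨hs0.trans hr.1.le, hr.2⟩, hge⟩)) (not_le.2 hr.1)
  -- Both clocks stand still on `(s, t]`.
  have hsneg : h s < 0 := by
    have h1 : posTime h t = posTime h s :=
      sojourn_eq_of_forall_not _ hst fun r hr => (hafter r hr).not_gt
    have h2 : zeroTime h t = zeroTime h s :=
      sojourn_eq_of_forall_not _ hst fun r hr => (hafter r hr).ne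
    rw [hsol.2 s hs0, ← h1, ← h2, ← hsol.2 t ht]
    exact hneg
  have hspos : 0 < s := by
    rcases hs0.eq_or_lt with h | h
    · rw [← h] at hsneg
      exact absurd h0 (not_le.2 hsneg)
    · exact h
  obtain ⟨l, hl, hls⟩ := (mem_nhdsLT_iff_exists_Ioo_subset' hspos).1
    (hsol.eventually_neg_left hγ hf hjump hspos hsneg)
  obtain ⟨r, hrS, hlr, hrs⟩ := hs.exists_between hl
  rcases hrs.eq_or_lt with h | h
  · exact absurd hrS.2 (not_le.2 (h ▸ hsneg))
  · exact absurd hrS.2 (not_le.2 (hls ⟨hlr, h⟩))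

theorem StickySol.posTime_add_zeroTime {f h : ℝ → ℝ} {γ : ℝ} (hγ : 0 < γ) (hf : CadlagOn f)
    (hjump : NonnegJumps f) (hf0 : 0 ≤ f 0) (hsol : StickySol f γ h) {t : ℝ} (ht : 0 ≤ t) :
    posTime h t + zeroTime h t = t := by
  have hmeas : MeasurableSet {x ∈ Icc (0:ℝ) t | h x = 0} := by
    have h1 := (measurableSet_Ici (a := (0:ℝ))).subtype_image
      (hsol.1 (measurableSet_singleton (0:ℝ)))
    convert h1.inter (measurableSet_Icc (a := (0:ℝ)) (b := t)) using 1
    ext x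
    constructor
    · rintro ⟨hx, h0⟩
      exact ⟨⟨⟨x, hx.1⟩, h0, rfl⟩, hx⟩
    · rintro ⟨⟨y, h0, rfl⟩, hx⟩
      exact ⟨hx, h0⟩
  have hdisj : Disjoint {x ∈ Icc (0:ℝ) t | 0 < h x} {x ∈ Icc (0:ℝ) t | h x = 0} :=
    Set.disjoint_left.2 fun x hx hx' => hx.2.ne' hx'.2
  have hunion : {x ∈ Icc (0:ℝ) t | 0 < h x} ∪ {x ∈ Icc (0:ℝ) t | h x = 0} = Icc 0 t := by
    ext x
    constructor
    · rintro (hx | hx) <;> exact hx.1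
    · intro hx
      rcases (hsol.nonneg hγ hf hjump hf0 hx.1).eq_or_lt with h | h
      · exact Or.inr ⟨hx, h.symm⟩
      · exact Or.inl ⟨hx, h⟩
  have hfin (p : ℝ → Prop) : volume {x ∈ Icc (0:ℝ) t | p x} ≠ ⊤ :=
    measure_ne_top_of_subset (fun x hx => hx.1) (by simp : volume (Icc (0:ℝ) t) ≠ ⊤)
  rw [posTime, zeroTime, ← ENNReal.toReal_add (hfin _) (hfin _),
    ← measure_union hdisj hmeas, hunion, Real.volume_Icc, sub_zero, ENNReal.toReal_ofReal ht]

/-- Second comparison lemma: if `h` solves `Sγ(f)` with time change `c`, and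
`c*` is non-decreasing, `1`-Lipschitz with `c*(0) = 0`, takes non-negative
values, and `h*(t) = f^γ(c*(t)) + γt` is non-negative, then `c* ≤ c` on `[0,∞)`. -/
theorem sticky_time_change_ge
    (f h cs : ℝ → ℝ) (γ : ℝ) (hγ : 0 < γ)
    (hf : CadlagOn f) (hjump : NonnegJumps f) (hf0 : 0 ≤ f 0)
    (hsol : StickySol f γ h)
    (hcs_mono : MonotoneOn cs (Ici 0))
    (hcs_nonneg : ∀ t : ℝ, 0 ≤ t → 0 ≤ cs t)
    (hcs0 : cs 0 = 0)
    (hcs_lip : ∀ s t : ℝ, 0 ≤ s → s ≤ t → cs t - cs s ≤ t - s)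
    (hstar_nonneg : ∀ t : ℝ, 0 ≤ t → 0 ≤ (f (cs t) - γ * cs t) + γ * t) :
    ∀ t : ℝ, 0 ≤ t → cs t ≤ posTime h t := by
  intro t ht
  by_contra! hlt
  have hcs_cont : ContinuousOn cs (Ici 0) := by
    refine (LipschitzOnWith.of_dist_le_mul (K := 1) fun x hx y hy => ?_).continuousOn
    rw [Real.dist_eq, Real.dist_eq, NNReal.coe_one, one_mul]
    rcases le_total x y with h | h
    · rw [abs_sub_comm, abs_sub_comm x, abs_of_nonneg (sub_nonneg.2 h),
        abs_of_nonneg (sub_nonneg.2 (hcs_mono hx hy h))]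
      exact hcs_lip _ _ hx h
    · rw [abs_of_nonneg (sub_nonneg.2 h), abs_of_nonneg (sub_nonneg.2 (hcs_mono hy hx h))]
      exact hcs_lip _ _ hy h
  have hIci : Icc 0 t ⊆ Ici (0:ℝ) := fun x hx => hx.1
  -- `s` is the last time in `[0, t]` at which `cs ≤ posTime h`.
  obtain ⟨s, ⟨⟨hs0, hst⟩, hs⟩, hmax⟩ : ∃ s, IsGreatest {r ∈ Icc 0 t | cs r ≤ posTime h r} s := by
    have hcpt : IsCompact {r ∈ Icc 0 t | cs r ≤ posTime h r} :=
      isCompact_Icc.of_isClosed_subset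
        (isClosed_Icc.isClosed_le (hcs_cont.mono hIci) (continuous_posTime h).continuousOn)
        fun x hx => hx.1
    exact hcpt.exists_isGreatest ⟨0, ⟨le_rfl, ht⟩, hcs0.trans_le ENNReal.toReal_nonneg⟩
  have hsum {r : ℝ} (hr : 0 ≤ r) := hsol.posTime_add_zeroTime hγ hf hjump hf0 hr
  have hzero : ∀ r ∈ Ioc s t, h r ≠ 0 := by
    rintro r ⟨hsr, hrt⟩
    have hr0 : 0 ≤ r := hs0.trans hsr.le
    have hcr : posTime h r < cs r := by
      by_contra! hle
      exact absurd (hmax ⟨⟨hr0, hrt⟩, hle⟩) (not_le.2 hsr)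
    obtain ⟨r', ⟨hsr', hr'r⟩, hr' : cs r' = posTime h r⟩ := intermediate_value_Ico hsr.le
      (hcs_cont.mono fun x hx => hs0.trans hx.1)
      ⟨hs.trans (sojourn_mono _ hsr.le), hcr⟩
    have h1 := hstar_nonneg r' (hs0.trans hsr')
    rw [hr'] at h1
    have h2 := hsol.2 r hr0
    have h3 : zeroTime h r = r - posTime h r := by linarith [hsum hr0]
    rw [h3] at h2
    have h4 := mul_lt_mul_of_pos_left hr'r hγ
    exact ne_of_gt (by linarith)
  have hz : zeroTime h t = zeroTime h s := sojourn_eq_of_forall_not _ hst hzero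
  linarith [hsum ht, hsum hs0, hcs_lip s t hs0 hst]
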